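/- arXiv:1902.09128 — 2 statements merged into one kernel-verified Lean document; each statement's English description precedes it below -/
import Mathlib

section
/- (Theorem 1, worst-case mean-excess travel time) Let v ∈ ℝⁿ, α ∈ (0,1], ε ≥ 0 and let ξ̂¹,…,ξ̂ᴺ ∈ ℝⁿ (N ≥ 1) with empirical distribution F_N. Then the infimum over t ∈ ℝ of t + (1/α)·sup{ ∫ h(v,t,ξ) dμ(ξ) : μ a Borel probability measure on ℝⁿ with finite first moment and d_W(F_N,μ) ≤ ε } equals the optimal value of the linear program minimizing t + (1/α)·((1/N)·Σ_{i=1}^N s_i + λ·ε) over (t,s,λ) ∈ ℝ × ℝᴺ × ℝ subject to ⟨v,ξ̂ⁱ⟩ − t ≤ s_i, s_i ≥ 0 for all i, and ‖v‖_q ≤ λ. -/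
open MeasureTheory Filter Topology
open scoped ENNReal BigOperators

/-- The ℓp norm on ℝⁿ, for `p ∈ [1,∞]` (an extended nonnegative real). -/
noncomputable def lpNorm {n : ℕ} (p : ℝ≥0∞) (x : Fin n → ℝ) : ℝ :=
  if p = ∞ then ⨆ i, |x i| else (∑ i, |x i| ^ p.toReal) ^ (1 / p.toReal)

/-- The Euclidean inner product on ℝⁿ. -/
def ip {n : ℕ} (w x : Fin n → ℝ) : ℝ := ∑ i, w i * x i


/-- `h(v,t,ξ) = max(⟨ξ,v⟩ − t, 0)`. -/
noncomputable def hfun {n : ℕ} (v : Fin n → ℝ) (t : ℝ) (ξ : Fin n → ℝ) : ℝ :=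
  max (ip ξ v - t) 0

/-- The empirical distribution `(1/N)·Σᵢ δ_{ξⁱ}` of `N` samples. -/
noncomputable def empirical {n : ℕ} (N : ℕ) (ξ : Fin N → Fin n → ℝ) :
    MeasureTheory.Measure (Fin n → ℝ) :=
  (N : ℝ≥0∞)⁻¹ • ∑ i, MeasureTheory.Measure.dirac (ξ i)

/-- The Wasserstein distance (valued in `ℝ≥0∞`) between two Borel probability measures
on ℝⁿ, with ground metric `‖·‖_p`: the infimum over couplings `K` (probability measures on
ℝⁿ × ℝⁿ with the prescribed marginals) of `∫ ‖x − y‖_p dK(x,y)`. -/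
noncomputable def dW {n : ℕ} (p : ℝ≥0∞) (μ ν : MeasureTheory.Measure (Fin n → ℝ)) : ℝ≥0∞ :=
  ⨅ (K : MeasureTheory.Measure ((Fin n → ℝ) × (Fin n → ℝ)))
    (_ : MeasureTheory.IsProbabilityMeasure K)
    (_ : K.map Prod.fst = μ) (_ : K.map Prod.snd = ν),
    ∫⁻ z, ENNReal.ofReal (lpNorm p (z.1 - z.2)) ∂K

/-!
By Hölder's inequality `h(v, t, ·)` is `‖v‖_q`-Lipschitz for the `ℓp` norm, so moving the reference
measure by a distance at most `ε` raises its mean by at most `‖v‖_q * ε`. This bound is approached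
by shifting a fraction `δ` of the mass by `(ε / δ) • u`, where `u` is an `ℓp` unit vector dual to
`v`: the transport costs `ε`, and as `δ → 0` the gain tends to `‖v‖_q * ε`, because `h(v, t, ·)`
lies above the affine function `⟨·, v⟩ - t`. Hence the inner supremum is
`(1/N) * ∑ i, h(v, t, ξ i) + ‖v‖_q * ε`, and the linear program is its epigraph form.
-/

section LpNorm

variable {n : ℕ} {p : ℝ≥0∞}

lemma lpNorm_top (x : Fin n → ℝ) : lpNorm ∞ x = ⨆ i, |x i| := if_pos rfl

lemma lpNorm_of_ne_top (hp : p ≠ ∞) (x : Fin n → ℝ) :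
    lpNorm p x = (∑ i, |x i| ^ p.toReal) ^ (1 / p.toReal) := if_neg hp

lemma lpNorm_one (x : Fin n → ℝ) : lpNorm 1 x = ∑ i, |x i| := by
  simp [lpNorm_of_ne_top ENNReal.one_ne_top]

lemma lpNorm_nonneg (p : ℝ≥0∞) (x : Fin n → ℝ) : 0 ≤ lpNorm p x := by
  rcases eq_or_ne p ∞ with rfl | hp
  · rw [lpNorm_top]
    exact Real.iSup_nonneg fun i => abs_nonneg _
  · rw [lpNorm_of_ne_top hp]
    positivity

lemma lpNorm_eq_norm_toLp (p : ℝ≥0∞) [hp : Fact (1 ≤ p)] (x : Fin n → ℝ) :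
    lpNorm p x = ‖(WithLp.toLp p x : PiLp p fun _ : Fin n => ℝ)‖ := by
  rcases eq_or_ne p ∞ with rfl | hp_top
  · rw [lpNorm_top, PiLp.norm_eq_ciSup]
    rfl
  · have hp_pos : 0 < p.toReal := ENNReal.toReal_pos (zero_lt_one.trans_le hp.out).ne' hp_top
    rw [lpNorm_of_ne_top hp_top, PiLp.norm_eq_sum hp_pos]
    rfl

lemma continuous_lpNorm [Fact (1 ≤ p)] : Continuous fun x : Fin n → ℝ => lpNorm p x := by
  simp_rw [lpNorm_eq_norm_toLp]
  exact (PiLp.continuous_toLp p _).norm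

lemma lpNorm_smul [Fact (1 ≤ p)] (c : ℝ) (x : Fin n → ℝ) :
    lpNorm p (c • x) = |c| * lpNorm p x := by
  rw [lpNorm_eq_norm_toLp, lpNorm_eq_norm_toLp, WithLp.toLp_smul, norm_smul, Real.norm_eq_abs]

lemma lpNorm_neg [Fact (1 ≤ p)] (x : Fin n → ℝ) : lpNorm p (-x) = lpNorm p x := by
  rw [lpNorm_eq_norm_toLp, lpNorm_eq_norm_toLp, WithLp.toLp_neg, norm_neg]

lemma lpNorm_zero [Fact (1 ≤ p)] : lpNorm p (0 : Fin n → ℝ) = 0 := by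
  rw [lpNorm_eq_norm_toLp, WithLp.toLp_zero, norm_zero]

end LpNorm

section Duality

variable {n : ℕ} {p q : ℝ≥0∞}

lemma ip_comm (x v : Fin n → ℝ) : ip x v = ip v x := dotProduct_comm x v

lemma ip_add_left (x y v : Fin n → ℝ) : ip (x + y) v = ip x v + ip y v := add_dotProduct x y v

lemma ip_smul_left (c : ℝ) (x v : Fin n → ℝ) : ip (c • x) v = c * ip x v := smul_dotProduct c x v

lemma eq_one_or_eq_top_or_holderConjugate_toReal (p q : ℝ≥0∞) [p.HolderConjugate q] :
    (p = 1 ∧ q = ∞) ∨ (p = ∞ ∧ q = 1) ∨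
      (p ≠ ∞ ∧ q ≠ ∞ ∧ p.toReal.HolderConjugate q.toReal) := by
  by_cases hp : p = ∞
  · exact .inr (.inl ⟨hp, (ENNReal.HolderConjugate.eq_top_iff_eq_one p q).1 hp⟩)
  by_cases hq : q = ∞
  · exact .inl ⟨(ENNReal.HolderConjugate.eq_top_iff_eq_one q p).1 hq, hq⟩
  · exact .inr (.inr ⟨hp, hq, ENNReal.HolderConjugate.toReal_of_ne_top hp hq⟩)

lemma ip_le_lpNorm_one_mul_lpNorm_top (x v : Fin n → ℝ) :
    ip x v ≤ lpNorm 1 x * lpNorm ∞ v := by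
  rw [lpNorm_one, lpNorm_top, Finset.sum_mul]
  refine Finset.sum_le_sum fun i _ => (le_abs_self _).trans ?_
  rw [abs_mul]
  gcongr
  exact le_ciSup (f := fun j => |v j|) (Set.finite_range _).bddAbove i

lemma ip_le_lpNorm_mul_lpNorm [p.HolderConjugate q] (x v : Fin n → ℝ) :
    ip x v ≤ lpNorm p x * lpNorm q v := by
  rcases eq_one_or_eq_top_or_holderConjugate_toReal p q with
    ⟨rfl, rfl⟩ | ⟨rfl, rfl⟩ | ⟨hp, hq, hpq⟩
  · exact ip_le_lpNorm_one_mul_lpNorm_top x v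
  · rw [ip_comm, mul_comm]
    exact ip_le_lpNorm_one_mul_lpNorm_top v x
  · rw [lpNorm_of_ne_top hp, lpNorm_of_ne_top hq]
    exact Real.inner_le_Lp_mul_Lq Finset.univ x v hpq

lemma abs_coe_sign_le_one (a : ℝ) : |(SignType.sign a : ℝ)| ≤ 1 := by
  rcases lt_trichotomy a 0 with h | h | h <;> simp [h]

lemma exists_lpNorm_one_le_one_ip_eq_lpNorm_top (v : Fin n → ℝ) :
    ∃ u : Fin n → ℝ, lpNorm 1 u ≤ 1 ∧ ip u v = lpNorm ∞ v := by
  simp only [lpNorm_one, lpNorm_top]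
  rcases isEmpty_or_nonempty (Fin n) with _ | _
  · exact ⟨0, by simp, by simp [ip]⟩
  obtain ⟨j, hj⟩ := exists_eq_ciSup_of_finite (f := fun i => |v i|)
  refine ⟨Pi.single j (SignType.sign (v j) : ℝ), ?_, ?_⟩
  · simpa [Pi.single_apply, apply_ite] using abs_coe_sign_le_one (v j)
  · rw [← hj, ← sign_mul_self (v j)]
    exact single_dotProduct v _ j

lemma exists_lpNorm_top_le_one_ip_eq_lpNorm_one (v : Fin n → ℝ) :
    ∃ u : Fin n → ℝ, lpNorm ∞ u ≤ 1 ∧ ip u v = lpNorm 1 v := by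
  refine ⟨fun i => (SignType.sign (v i) : ℝ), ?_, ?_⟩
  · rw [lpNorm_top]
    exact Real.iSup_le (fun i => abs_coe_sign_le_one (v i)) zero_le_one
  · rw [lpNorm_one]
    exact Finset.sum_congr rfl fun i _ => sign_mul_self (v i)

lemma exists_lpNorm_le_one_ip_eq_of_ne_top (hp : p ≠ ∞) (hq : q ≠ ∞)
    (hpq : p.toReal.HolderConjugate q.toReal) (v : Fin n → ℝ) :
    ∃ u : Fin n → ℝ, lpNorm p u ≤ 1 ∧ ip u v = lpNorm q v := by
  obtain ⟨g, hg_norm, hg_eq⟩ :=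
    (NNReal.isGreatest_Lp Finset.univ (fun i => Real.nnabs (v i)) hpq.symm).1
  refine ⟨fun i => (SignType.sign (v i) : ℝ) * g i, ?_, ?_⟩
  · have hle (i : Fin n) : |(SignType.sign (v i) : ℝ) * g i| ≤ g i := by
      rw [abs_mul, NNReal.abs_eq]
      exact mul_le_of_le_one_left (g i).2 (abs_coe_sign_le_one _)
    have hg_sum : ∑ i, (g i : ℝ) ^ p.toReal ≤ 1 := by
      exact_mod_cast (hg_norm : ∑ i, g i ^ p.toReal ≤ 1)
    rw [lpNorm_of_ne_top hp]
    refine Real.rpow_le_one (by positivity) (le_trans ?_ hg_sum) (by positivity)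
    exact Finset.sum_le_sum fun i _ => Real.rpow_le_rpow (abs_nonneg _) (hle i) hpq.nonneg
  · have hg_pair : ∑ i, |v i| * (g i : ℝ) = lpNorm q v := by
      rw [lpNorm_of_ne_top hq]
      simpa using congrArg NNReal.toReal hg_eq
    rw [← hg_pair]
    refine Finset.sum_congr rfl fun i _ => ?_
    rw [mul_right_comm, sign_mul_self]

lemma exists_lpNorm_le_one_ip_eq_lpNorm [p.HolderConjugate q] (v : Fin n → ℝ) :
    ∃ u : Fin n → ℝ, lpNorm p u ≤ 1 ∧ ip u v = lpNorm q v := by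
  rcases eq_one_or_eq_top_or_holderConjugate_toReal p q with
    ⟨rfl, rfl⟩ | ⟨rfl, rfl⟩ | ⟨hp, hq, hpq⟩
  · exact exists_lpNorm_one_le_one_ip_eq_lpNorm_top v
  · exact exists_lpNorm_top_le_one_ip_eq_lpNorm_one v
  · exact exists_lpNorm_le_one_ip_eq_of_ne_top hp hq hpq v

end Duality

/-- `f` is `K`-Lipschitz with respect to the `ℓp` norm. The metric is that of `PiLp`, since the
built-in one on `Fin n → ℝ` comes from the sup norm. -/
def LpLipschitzWith {n : ℕ} (p : ℝ≥0∞) [Fact (1 ≤ p)] (K : NNReal) (f : (Fin n → ℝ) → ℝ) : Prop :=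
  LipschitzWith K fun x : PiLp p fun _ : Fin n => ℝ => f x.ofLp

namespace LpLipschitzWith

variable {n : ℕ} {p : ℝ≥0∞} [Fact (1 ≤ p)] {K : NNReal} {f : (Fin n → ℝ) → ℝ}

lemma of_le_add_mul (h : ∀ x y, f x ≤ f y + K * lpNorm p (x - y)) : LpLipschitzWith p K f :=
  LipschitzWith.of_le_add_mul K fun x y => by
    simpa [dist_eq_norm, lpNorm_eq_norm_toLp] using h x.ofLp y.ofLp

lemma le_add_mul (hf : LpLipschitzWith p K f) (x y : Fin n → ℝ) :
    f x ≤ f y + K * lpNorm p (x - y) := by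
  simpa [dist_eq_norm, lpNorm_eq_norm_toLp] using
    LipschitzWith.le_add_mul hf (WithLp.toLp p x) (WithLp.toLp p y)

protected lemma continuous (hf : LpLipschitzWith p K f) : Continuous f :=
  (LipschitzWith.continuous hf).comp (PiLp.continuous_toLp p _)

protected lemma lpNorm : LpLipschitzWith p 1 fun x : Fin n → ℝ => lpNorm p x := by
  simp only [LpLipschitzWith, lpNorm_eq_norm_toLp]
  exact lipschitzWith_one_norm

lemma comp_add_right (hf : LpLipschitzWith p K f) (w : Fin n → ℝ) :
    LpLipschitzWith p K fun x => f (x + w) :=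
  of_le_add_mul fun x y => by simpa using hf.le_add_mul (x + w) (y + w)

lemma integrable (hf : LpLipschitzWith p K f) {μ : Measure (Fin n → ℝ)} [IsFiniteMeasure μ]
    (hμ : Integrable (fun x => lpNorm p x) μ) : Integrable f μ := by
  refine ((integrable_const |f 0|).add (hμ.const_mul K)).mono'
    hf.continuous.aestronglyMeasurable (.of_forall fun x => ?_)
  have hx := hf.le_add_mul x 0
  have hx' := hf.le_add_mul 0 x
  rw [zero_sub, _root_.lpNorm_neg] at hx'
  rw [sub_zero] at hx
  change |f x| ≤ |f 0| + K * lpNorm p x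
  exact abs_le.2 ⟨by linarith [neg_abs_le (f 0)], by linarith [le_abs_self (f 0)]⟩

end LpLipschitzWith

section SplitMap

variable {X Y Z : Type*} [MeasurableSpace X] [MeasurableSpace Y] [MeasurableSpace Z]

/-- The image of `P` under the random map that equals `f` with probability `1 - δ` and `g` with
probability `δ`; couplings and perturbations that move a fraction `δ` of the mass have this form.
Meant for `δ ∈ [0, 1]`, since `ENNReal.ofReal` truncates negative weights. -/
noncomputable def splitMap (δ : ℝ) (f g : X → Y) (P : Measure X) : Measure Y :=
  ENNReal.ofReal (1 - δ) • P.map f + ENNReal.ofReal δ • P.map g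

variable {δ : ℝ} {f g : X → Y} {P : Measure X}

lemma map_splitMap {k : Y → Z} (hk : Measurable k) (hf : Measurable f) (hg : Measurable g) :
    (splitMap δ f g P).map k = splitMap δ (k ∘ f) (k ∘ g) P := by
  simp only [splitMap, Measure.map_add _ _ hk, Measure.map_smul, Measure.map_map hk hf,
    Measure.map_map hk hg]

lemma splitMap_self (hδ : δ ∈ Set.Icc 0 1) (f : X → Y) (P : Measure X) :
    splitMap δ f f P = P.map f := by
  rw [splitMap, ← add_smul, ← ENNReal.ofReal_add (sub_nonneg.2 hδ.2) hδ.1]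
  simp

lemma isProbabilityMeasure_splitMap [IsProbabilityMeasure P] (hδ : δ ∈ Set.Icc 0 1)
    (hf : Measurable f) (hg : Measurable g) : IsProbabilityMeasure (splitMap δ f g P) := by
  have := Measure.isProbabilityMeasure_map (μ := P) hf.aemeasurable
  have := Measure.isProbabilityMeasure_map (μ := P) hg.aemeasurable
  constructor
  simp only [splitMap, Measure.add_apply, Measure.smul_apply, measure_univ, smul_eq_mul, mul_one]
  rw [← ENNReal.ofReal_add (sub_nonneg.2 hδ.2) hδ.1]
  simp

lemma lintegral_splitMap {k : Y → ℝ≥0∞} (hk : Measurable k) (hf : Measurable f)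
    (hg : Measurable g) :
    ∫⁻ y, k y ∂splitMap δ f g P =
      ENNReal.ofReal (1 - δ) * ∫⁻ x, k (f x) ∂P + ENNReal.ofReal δ * ∫⁻ x, k (g x) ∂P := by
  simp only [splitMap, lintegral_add_measure, lintegral_smul_measure, lintegral_map hk hf,
    lintegral_map hk hg, smul_eq_mul]

lemma integrable_splitMap {k : Y → ℝ} (hk : StronglyMeasurable k) (hf : Measurable f)
    (hg : Measurable g) (hkf : Integrable (fun x => k (f x)) P)
    (hkg : Integrable (fun x => k (g x)) P) : Integrable k (splitMap δ f g P) := by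
  refine .add_measure (.smul_measure ?_ ENNReal.ofReal_ne_top)
    (.smul_measure ?_ ENNReal.ofReal_ne_top)
  · exact (integrable_map_measure hk.aestronglyMeasurable hf.aemeasurable).2 hkf
  · exact (integrable_map_measure hk.aestronglyMeasurable hg.aemeasurable).2 hkg

lemma integral_splitMap {k : Y → ℝ} (hδ : δ ∈ Set.Icc 0 1) (hk : StronglyMeasurable k)
    (hf : Measurable f) (hg : Measurable g) (hkf : Integrable (fun x => k (f x)) P)
    (hkg : Integrable (fun x => k (g x)) P) :
    ∫ y, k y ∂splitMap δ f g P = (1 - δ) * ∫ x, k (f x) ∂P + δ * ∫ x, k (g x) ∂P := by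
  replace hkf := (integrable_map_measure hk.aestronglyMeasurable hf.aemeasurable).2 hkf
  replace hkg := (integrable_map_measure hk.aestronglyMeasurable hg.aemeasurable).2 hkg
  rw [splitMap, integral_add_measure (hkf.smul_measure ENNReal.ofReal_ne_top)
      (hkg.smul_measure ENNReal.ofReal_ne_top), integral_smul_measure, integral_smul_measure,
    integral_map hf.aemeasurable hk.aestronglyMeasurable,
    integral_map hg.aemeasurable hk.aestronglyMeasurable,
    ENNReal.toReal_ofReal (sub_nonneg.2 hδ.2), ENNReal.toReal_ofReal hδ.1, smul_eq_mul, smul_eq_mul]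

end SplitMap

section Wasserstein

variable {n : ℕ} {p : ℝ≥0∞} {P μ : Measure (Fin n → ℝ)}

lemma dW_map_fst_map_snd_le (K : Measure ((Fin n → ℝ) × (Fin n → ℝ))) [IsProbabilityMeasure K] :
    dW p (K.map Prod.fst) (K.map Prod.snd) ≤
      ∫⁻ z, ENNReal.ofReal (lpNorm p (z.1 - z.2)) ∂K :=
  iInf_le_of_le K <| iInf_le_of_le ‹_› <| iInf_le_of_le rfl <| iInf_le_of_le rfl le_rfl

variable [Fact (1 ≤ p)]

lemma exists_coupling_integral_lt_of_dW_lt {r : ℝ} (h : dW p P μ < ENNReal.ofReal r) :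
    ∃ K : Measure ((Fin n → ℝ) × (Fin n → ℝ)), K.map Prod.fst = P ∧ K.map Prod.snd = μ ∧
      Integrable (fun z => lpNorm p (z.1 - z.2)) K ∧ ∫ z, lpNorm p (z.1 - z.2) ∂K < r := by
  simp only [dW, iInf_lt_iff] at h
  obtain ⟨K, -, hfst, hsnd, hcost⟩ := h
  have hnonneg : ∀ᵐ z ∂K, 0 ≤ lpNorm p (z.1 - z.2) := .of_forall fun z => lpNorm_nonneg p _
  have hint : Integrable (fun z => lpNorm p (z.1 - z.2)) K :=
    ⟨(continuous_lpNorm.comp (by fun_prop)).aestronglyMeasurable,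
      (hasFiniteIntegral_iff_ofReal hnonneg).2 (hcost.trans ENNReal.ofReal_lt_top)⟩
  rw [← ofReal_integral_eq_lintegral_ofReal hint hnonneg] at hcost
  exact ⟨K, hfst, hsnd, hint, (ENNReal.ofReal_lt_ofReal_iff'.1 hcost).1⟩

lemma integral_le_integral_add_mul_of_dW_lt {f : (Fin n → ℝ) → ℝ} {L : NNReal}
    (hf : LpLipschitzWith p L f) (hP : Integrable f P) (hμ : Integrable f μ) {r : ℝ}
    (h : dW p P μ < ENNReal.ofReal r) : ∫ x, f x ∂μ ≤ ∫ x, f x ∂P + L * r := by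
  obtain ⟨K, rfl, rfl, hcost, hlt⟩ := exists_coupling_integral_lt_of_dW_lt h
  have hfst : Integrable (fun z => f z.1) K := hP.comp_measurable measurable_fst
  have hsnd : Integrable (fun z => f z.2) K := hμ.comp_measurable measurable_snd
  rw [integral_map measurable_fst.aemeasurable hP.aestronglyMeasurable,
    integral_map measurable_snd.aemeasurable hμ.aestronglyMeasurable]
  calc ∫ z, f z.2 ∂K
      ≤ ∫ z, (f z.1 + L * lpNorm p (z.1 - z.2)) ∂K := by
        refine integral_mono hsnd (hfst.add (hcost.const_mul L)) fun z => ?_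
        rw [← _root_.lpNorm_neg (z.1 - z.2), neg_sub]
        exact hf.le_add_mul z.2 z.1
    _ = ∫ z, f z.1 ∂K + L * ∫ z, lpNorm p (z.1 - z.2) ∂K := by
        rw [integral_add hfst (hcost.const_mul L), integral_const_mul]
    _ ≤ ∫ z, f z.1 ∂K + L * r := by gcongr

lemma integral_le_integral_add_mul_of_dW_le {f : (Fin n → ℝ) → ℝ} {L : NNReal}
    (hf : LpLipschitzWith p L f) (hP : Integrable f P) (hμ : Integrable f μ) {ε : ℝ}
    (hε : 0 ≤ ε) (h : dW p P μ ≤ ENNReal.ofReal ε) :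
    ∫ x, f x ∂μ ≤ ∫ x, f x ∂P + L * ε := by
  have hlim : Tendsto (fun r : ℝ => ∫ x, f x ∂P + L * r) (𝓝[>] ε) (𝓝 (∫ x, f x ∂P + L * ε)) :=
    (Continuous.tendsto (by fun_prop) ε).mono_left nhdsWithin_le_nhds
  refine ge_of_tendsto hlim (eventually_nhdsWithin_of_forall fun r (hr : ε < r) => ?_)
  exact integral_le_integral_add_mul_of_dW_lt hf hP hμ
    (h.trans_lt ((ENNReal.ofReal_lt_ofReal_iff (hε.trans_lt hr)).2 hr))

lemma dW_splitMap_id_add_const_le [IsProbabilityMeasure P] {δ : ℝ} (hδ : δ ∈ Set.Icc 0 1)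
    (w : Fin n → ℝ) : dW p P (splitMap δ id (· + w) P) ≤ ENNReal.ofReal (δ * lpNorm p w) := by
  let stay : (Fin n → ℝ) → (Fin n → ℝ) × (Fin n → ℝ) := fun x => (x, x)
  let shift : (Fin n → ℝ) → (Fin n → ℝ) × (Fin n → ℝ) := fun x => (x, x + w)
  have hstay : Measurable stay := by fun_prop
  have hshift : Measurable shift := by fun_prop
  have hcost : Measurable fun z : (Fin n → ℝ) × (Fin n → ℝ) =>
      ENNReal.ofReal (lpNorm p (z.1 - z.2)) :=
    (continuous_lpNorm.comp (by fun_prop)).measurable.ennreal_ofReal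
  have := isProbabilityMeasure_splitMap (P := P) hδ hstay hshift
  have hfst : (splitMap δ stay shift P).map Prod.fst = P := by
    rw [map_splitMap measurable_fst hstay hshift]
    exact (splitMap_self hδ id P).trans Measure.map_id
  have hsnd : (splitMap δ stay shift P).map Prod.snd = splitMap δ id (· + w) P :=
    map_splitMap measurable_snd hstay hshift
  calc dW p P (splitMap δ id (· + w) P)
      ≤ ∫⁻ z, ENNReal.ofReal (lpNorm p (z.1 - z.2)) ∂splitMap δ stay shift P := by
        simpa only [hfst, hsnd] using dW_map_fst_map_snd_le (p := p) (splitMap δ stay shift P)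
    _ = ENNReal.ofReal (δ * lpNorm p w) := by
        rw [lintegral_splitMap hcost hstay hshift, ENNReal.ofReal_mul hδ.1]
        simp [stay, shift, _root_.lpNorm_zero, _root_.lpNorm_neg]

/-- The ambiguity set of a distributionally robust problem: the probability measures of finite first
moment at Wasserstein distance at most `ε` from the reference measure `P`. -/
def wassersteinBall (p : ℝ≥0∞) (P : Measure (Fin n → ℝ)) (ε : ℝ) : Set (Measure (Fin n → ℝ)) :=
  {μ | IsProbabilityMeasure μ ∧ Integrable (fun x => lpNorm p x) μ ∧ dW p P μ ≤ ENNReal.ofReal ε}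

lemma splitMap_id_add_const_mem_wassersteinBall [IsProbabilityMeasure P]
    (hP : Integrable (fun x => lpNorm p x) P) {δ ε : ℝ} (hδ : δ ∈ Set.Icc 0 1) {w : Fin n → ℝ}
    (hw : δ * lpNorm p w ≤ ε) : splitMap δ id (· + w) P ∈ wassersteinBall p P ε := by
  have hshift : Measurable fun x : Fin n → ℝ => x + w := by fun_prop
  refine ⟨isProbabilityMeasure_splitMap hδ measurable_id hshift, ?_,
    (dW_splitMap_id_add_const_le hδ w).trans (ENNReal.ofReal_le_ofReal hw)⟩
  exact integrable_splitMap continuous_lpNorm.stronglyMeasurable measurable_id hshift hP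
    ((LpLipschitzWith.lpNorm.comp_add_right w).integrable hP)

lemma exists_mem_wassersteinBall_le_integral [IsProbabilityMeasure P]
    (hP : Integrable (fun x => lpNorm p x) P) {f g : (Fin n → ℝ) → ℝ} {L : NNReal}
    (hf : LpLipschitzWith p L f) (hg : Integrable g P) {u : Fin n → ℝ} (hu : lpNorm p u ≤ 1)
    (hgf : ∀ x s, 0 ≤ s → g x + L * s ≤ f (x + s • u)) {ε : ℝ} (hε : 0 ≤ ε) {δ : ℝ}
    (hδ : δ ∈ Set.Ioc 0 1) :
    ∃ μ ∈ wassersteinBall p P ε,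
      (1 - δ) * ∫ x, f x ∂P + δ * ∫ x, g x ∂P + L * ε ≤ ∫ x, f x ∂μ := by
  have hδ_pos : 0 < δ := hδ.1
  have hδ_mem : δ ∈ Set.Icc 0 1 := Set.Ioc_subset_Icc_self hδ
  set w : Fin n → ℝ := (ε / δ) • u with hw_def
  have hcost : δ * lpNorm p w ≤ ε := calc
    δ * lpNorm p w = ε * lpNorm p u := by
      rw [hw_def, lpNorm_smul, abs_of_nonneg (by positivity)]
      field_simp
    _ ≤ ε := mul_le_of_le_one_right hε hu
  have hf_shift : Integrable (fun x => f (x + w)) P := (hf.comp_add_right w).integrable hP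
  have hgain : ∫ x, g x ∂P + L * (ε / δ) ≤ ∫ x, f (x + w) ∂P := calc
    ∫ x, g x ∂P + L * (ε / δ) = ∫ x, (g x + L * (ε / δ)) ∂P := by
      simp [integral_add hg (integrable_const _)]
    _ ≤ ∫ x, f (x + w) ∂P :=
      integral_mono (hg.add (integrable_const _)) hf_shift fun x => hgf x _ (by positivity)
  refine ⟨_, splitMap_id_add_const_mem_wassersteinBall hP hδ_mem hcost, ?_⟩
  rw [integral_splitMap hδ_mem hf.continuous.stronglyMeasurable measurable_id (by fun_prop)
    (hf.integrable hP) hf_shift]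
  calc (1 - δ) * ∫ x, f x ∂P + δ * ∫ x, g x ∂P + L * ε
      = (1 - δ) * ∫ x, f x ∂P + δ * (∫ x, g x ∂P + L * (ε / δ)) := by
        field_simp
        ring
    _ ≤ (1 - δ) * ∫ x, f x ∂P + δ * ∫ x, f (x + w) ∂P := by gcongr

theorem isLUB_integral_wassersteinBall [IsProbabilityMeasure P]
    (hP : Integrable (fun x => lpNorm p x) P) {f g : (Fin n → ℝ) → ℝ} {L : NNReal}
    (hf : LpLipschitzWith p L f) (hg : Integrable g P) {u : Fin n → ℝ} (hu : lpNorm p u ≤ 1)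
    (hgf : ∀ x s, 0 ≤ s → g x + L * s ≤ f (x + s • u)) {ε : ℝ} (hε : 0 ≤ ε) :
    IsLUB {r : ℝ | ∃ μ ∈ wassersteinBall p P ε, r = ∫ x, f x ∂μ} (∫ x, f x ∂P + L * ε) := by
  constructor
  · rintro _ ⟨μ, ⟨hμ_prob, hμ, hd⟩, rfl⟩
    exact integral_le_integral_add_mul_of_dW_le hf (hf.integrable hP) (hf.integrable hμ) hε hd
  · intro M hM
    let lower (δ : ℝ) : ℝ := (1 - δ) * ∫ x, f x ∂P + δ * ∫ x, g x ∂P + L * ε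
    have hlim : Tendsto lower (𝓝[>] 0) (𝓝 (∫ x, f x ∂P + L * ε)) := by
      have hcont : Continuous lower := by fun_prop
      simpa [lower] using (hcont.tendsto 0).mono_left (nhdsWithin_le_nhds (s := Set.Ioi 0))
    refine le_of_tendsto hlim ?_
    filter_upwards [Ioc_mem_nhdsGT zero_lt_one] with δ hδ
    obtain ⟨μ, hμ, hle⟩ := exists_mem_wassersteinBall_le_integral hP hf hg hu hgf hε hδ
    exact hle.trans (hM ⟨μ, hμ, rfl⟩)

end Wasserstein

section MeanExcess

variable {n : ℕ} {p q : ℝ≥0∞}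

lemma hfun_le_iff {v x : Fin n → ℝ} {t s : ℝ} : hfun v t x ≤ s ↔ ip v x - t ≤ s ∧ 0 ≤ s := by
  rw [hfun, max_le_iff, ip_comm]

lemma lpLipschitzWith_ip_left [Fact (1 ≤ p)] [p.HolderConjugate q] (v : Fin n → ℝ) :
    LpLipschitzWith p (lpNorm q v).toNNReal fun x => ip x v := by
  refine .of_le_add_mul fun x y => ?_
  rw [Real.coe_toNNReal _ (lpNorm_nonneg q v), mul_comm]
  calc ip x v = ip y v + ip (x - y) v := by rw [← ip_add_left, add_sub_cancel]
    _ ≤ ip y v + lpNorm p (x - y) * lpNorm q v := by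
      gcongr
      exact ip_le_lpNorm_mul_lpNorm _ _

lemma lpLipschitzWith_hfun [Fact (1 ≤ p)] [p.HolderConjugate q] (v : Fin n → ℝ) (t : ℝ) :
    LpLipschitzWith p (lpNorm q v).toNNReal (hfun v t) := by
  refine LipschitzWith.max_const (.of_le_add_mul _ fun x y => ?_) 0
  linarith [LipschitzWith.le_add_mul (lpLipschitzWith_ip_left (p := p) (q := q) v) x y]

theorem sSup_integral_hfun_wassersteinBall [Fact (1 ≤ p)] [p.HolderConjugate q]
    {P : Measure (Fin n → ℝ)} [IsProbabilityMeasure P] (hP : Integrable (fun x => lpNorm p x) P)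
    (v : Fin n → ℝ) (t : ℝ) {ε : ℝ} (hε : 0 ≤ ε) :
    sSup {r : ℝ | ∃ μ ∈ wassersteinBall p P ε, r = ∫ x, hfun v t x ∂μ} =
      ∫ x, hfun v t x ∂P + lpNorm q v * ε := by
  obtain ⟨u, hu, huv⟩ := exists_lpNorm_le_one_ip_eq_lpNorm (p := p) (q := q) v
  have hip : Integrable (fun x => ip x v - t) P :=
    ((lpLipschitzWith_ip_left (q := q) v).integrable hP).sub (integrable_const t)
  have hcoe := Real.coe_toNNReal _ (lpNorm_nonneg q v)
  have hray (x : Fin n → ℝ) (s : ℝ) (_ : 0 ≤ s) :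
      ip x v - t + (lpNorm q v).toNNReal * s ≤ hfun v t (x + s • u) := by
    refine le_trans (le_of_eq ?_) (le_max_left _ _)
    rw [hcoe, ip_add_left, ip_smul_left, huv]
    ring
  have hlub :=
    isLUB_integral_wassersteinBall hP (lpLipschitzWith_hfun (q := q) v t) hip hu hray hε
  rw [hcoe] at hlub
  exact hlub.csSup_eq hlub.nonempty

end MeanExcess

section Empirical

variable {n N : ℕ}

lemma isProbabilityMeasure_empirical [NeZero N] (ξ : Fin N → Fin n → ℝ) :
    IsProbabilityMeasure (empirical N ξ) := by
  constructor
  simp [empirical, Measure.finsetSum_apply,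
    ENNReal.inv_mul_cancel (NeZero.ne (N : ℝ≥0∞)) (ENNReal.natCast_ne_top N)]

lemma integrable_empirical [NeZero N] (ξ : Fin N → Fin n → ℝ) (f : (Fin n → ℝ) → ℝ) :
    Integrable f (empirical N ξ) := by
  refine Integrable.smul_measure ?_ (ENNReal.inv_ne_top.2 (NeZero.ne (N : ℝ≥0∞)))
  exact integrable_finsetSum_measure.2 fun i _ => integrable_dirac enorm_lt_top

lemma integral_empirical (ξ : Fin N → Fin n → ℝ) (f : (Fin n → ℝ) → ℝ) :
    ∫ x, f x ∂empirical N ξ = 1 / (N : ℝ) * ∑ i, f (ξ i) := by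
  rw [empirical, integral_smul_measure,
    integral_finsetSum_measure fun i _ => integrable_dirac enorm_lt_top]
  simp

end Empirical

/-- Theorem 1, worst-case METT: the infimum over `t` of
`t + (1/α)·sup{∫ h(v,t,·) dμ : d_W(F_N,μ) ≤ ε}` equals the optimal value of the LP
minimizing `t + (1/α)((1/N)Σ s_i + λε)` subject to `⟨v,ξ̂ⁱ⟩ − t ≤ s_i`, `s_i ≥ 0`,
`‖v‖_q ≤ λ`. -/
theorem stmt7 (n : ℕ) (hn : 1 ≤ n) (p q : ℝ≥0∞) (hp : 1 ≤ p) (hpq : 1 / p + 1 / q = 1)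
    (v : Fin n → ℝ) (α : ℝ) (hα : 0 < α) (hα1 : α ≤ 1) (ε : ℝ) (hε : 0 ≤ ε)
    (N : ℕ) (hN : 1 ≤ N) (ξ : Fin N → Fin n → ℝ) :
    (⨅ t : ℝ, t + (1 / α) *
        sSup {r : ℝ | ∃ μ : Measure (Fin n → ℝ), IsProbabilityMeasure μ ∧
          Integrable (fun x => lpNorm p x) μ ∧
          dW p (empirical N ξ) μ ≤ ENNReal.ofReal ε ∧ r = ∫ x, hfun v t x ∂μ}) =
      sInf {y : ℝ | ∃ (t : ℝ) (s : Fin N → ℝ) (lam : ℝ),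
        (∀ i, ip v (ξ i) - t ≤ s i ∧ 0 ≤ s i) ∧ lpNorm q v ≤ lam ∧
        y = t + (1 / α) * ((1 / (N : ℝ)) * ∑ i, s i + lam * ε)} := by
  have : p.HolderConjugate q := ENNReal.holderConjugate_iff.2 (by simpa only [one_div] using hpq)
  have : Fact (1 ≤ p) := ⟨hp⟩
  have : NeZero N := ⟨Nat.one_le_iff_ne_zero.1 hN⟩
  have := isProbabilityMeasure_empirical ξ
  have hsup (t : ℝ) :=
    sSup_integral_hfun_wassersteinBall (p := p) (q := q) (integrable_empirical ξ _) v t hε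
  simp only [wassersteinBall, Set.mem_ofPred_eq, and_assoc, integral_empirical] at hsup
  simp_rw [hsup, ← hfun_le_iff]
  refine csInf_eq_csInf_of_forall_exists_le ?_ ?_
  · rintro _ ⟨t, rfl⟩
    exact ⟨_, ⟨t, fun i => hfun v t (ξ i), lpNorm q v, fun i => le_rfl, le_rfl, rfl⟩, le_rfl⟩
  · rintro _ ⟨t, s, lam, hs, hlam, rfl⟩
    refine ⟨_, ⟨t, rfl⟩, ?_⟩
    dsimp only
    gcongr with i
    exact hs i
end

section
/- (Theorem 2, inner worst-case expectation with support set) Let a, b ∈ ℝⁿ with a ≤ b componentwise, let ξ̂¹,…,ξ̂ᴺ ∈ [a,b] (N ≥ 1) with empirical distribution F_N, let v ∈ ℝⁿ, t ∈ ℝ and ε ≥ 0. Then the supremum of ∫ h(v,t,ξ) dμ(ξ) over all Borel probability measures μ supported on [a,b] with d_W(F_N,μ) ≤ ε equals the optimal value of the convex program minimizing (1/N)·Σ_{i=1}^N s_i + λ·ε over s ∈ ℝᴺ, λ ∈ ℝ, and γ_i, η_i ∈ ℝⁿ (i = 1,…,N) subject to ⟨v + γ_i − η_i, ξ̂ⁱ⟩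 − ⟨γ_i,a⟩ + ⟨η_i,b⟩ − t ≤ s_i, ‖v + γ_i − η_i‖_q ≤ λ, γ_i ≥ 0, η_i ≥ 0 and s_i ≥ 0 for all i. -/
open MeasureTheory Filter Topology
open scoped ENNReal BigOperators

/-!
Weak duality is integration: if `h y ≤ s i + lam * ‖ξ i - y‖` on the support, then integrating this
inequality along an almost optimal coupling of the empirical measure and `μ` bounds `∫ h dμ` by
`1/N * ∑ i, s i + lam * ε`. For strong duality, mixing measures shows that the attainable pairs
(transport budget, expectation of `h`) form a convex set, and the slope of a line supporting it at
budget `ε` is the multiplier `lam`. Testing this line against measures which move each atom `ξ i` to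
a single point decouples the samples, and `s i` is the supremum of `h y - lam * ‖ξ i - y‖`. When
`ε = 0` there is no measure of smaller budget to start from, but then `s i = h (ξ i)` is optimal for
`lam` a Lipschitz constant of `h`.

It remains to write the constraint `⟨v, y⟩ - t ≤ s i + lam * ‖y - ξ i‖_p` on the box with
multipliers. Since `lam * ‖z‖_p` is the maximum of `⟨w, z⟩` over `‖w‖_q ≤ lam`, Sion's minimax
theorem gives one `w` that works for all `y`, and the remaining affine inequality on the box is
certified by `η - γ = v - w` with `γ, η ≥ 0`.
-/

section Development

open scoped NNReal
open WithLp (toLp)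

section PiLp

variable {ι : Type*} [Fintype ι] {p q : ℝ≥0∞} [Fact (1 ≤ p)] [Fact (1 ≤ q)] [p.HolderConjugate q]

variable (p q) in
theorem dotProduct_le_norm_toLp_mul_norm_toLp (w x : ι → ℝ) :
    w ⬝ᵥ x ≤ ‖toLp q w‖ * ‖toLp p x‖ := by
  have hB (_ : ι) : ‖ContinuousLinearMap.mul ℝ ℝ‖ ≤ ((1 : ℝ≥0) : ℝ) := by simp
  let e : lp (fun _ : ι => ℝ) q := Equiv.lpPiLp.symm (toLp q w)
  let f : lp (fun _ : ι => ℝ) p := Equiv.lpPiLp.symm (toLp p x)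
  calc w ⬝ᵥ x = lp.dualPairing q p (fun _ => ContinuousLinearMap.mul ℝ ℝ) hB e f := by
        rw [lp.dualPairing_apply, tsum_fintype]; rfl
    _ ≤ 1 * ‖e‖ * ‖f‖ :=
        (le_abs_self _).trans <|
          ContinuousLinearMap.le_of_opNorm₂_le_of_le _ (lp.norm_dualPairing _ hB) le_rfl le_rfl
    _ = ‖toLp q w‖ * ‖toLp p x‖ := by
        rw [one_mul, ← equiv_lpPiLp_norm e, ← equiv_lpPiLp_norm f, Equiv.apply_symm_apply,
          Equiv.apply_symm_apply]

theorem abs_coe_signType_le_one {R : Type*} [Ring R] [LinearOrder R] [IsStrictOrderedRing R]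
    (s : SignType) : |(s : R)| ≤ 1 := by
  cases s <;> simp

variable (p q) in
theorem exists_norm_toLp_le_one_dotProduct_eq (x : ι → ℝ) :
    ∃ w : ι → ℝ, ‖toLp q w‖ ≤ 1 ∧ w ⬝ᵥ x = ‖toLp p x‖ := by
  classical
  rcases isEmpty_or_nonempty ι with hι | hι
  · exact ⟨0, by simp, by simp [Subsingleton.elim x 0]⟩
  by_cases hp : p = ∞
  · obtain rfl : q = 1 := (ENNReal.HolderConjugate.eq_top_iff_eq_one p q).1 hp
    subst hp
    obtain ⟨i, hi⟩ := exists_eq_ciSup_of_finite (f := fun i => |x i|)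
    refine ⟨Pi.single i (SignType.sign (x i) : ℝ), ?_, ?_⟩
    · exact (PiLp.norm_single 1 _ i _).trans_le (abs_coe_signType_le_one _)
    · rw [single_dotProduct, sign_mul_self, PiLp.norm_eq_ciSup]
      exact hi
  by_cases hq : q = ∞
  · obtain rfl : p = 1 := (ENNReal.HolderConjugate.eq_top_iff_eq_one q p).1 hq
    subst hq
    refine ⟨fun i => SignType.sign (x i), ?_, ?_⟩
    · rw [PiLp.norm_eq_ciSup]
      exact ciSup_le fun i => abs_coe_signType_le_one _
    · simp [dotProduct, PiLp.norm_eq_of_L1, sign_mul_self]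
  have hpq : p.toReal.HolderConjugate q.toReal :=
    ENNReal.HolderConjugate.toReal_of_ne_top hp hq
  obtain ⟨g, hg, hgx⟩ := (NNReal.isGreatest_Lp Finset.univ (fun i => ‖x i‖₊) hpq).1
  refine ⟨fun i => SignType.sign (x i) * g i, ?_, ?_⟩
  · rw [PiLp.norm_eq_sum hpq.symm.pos]
    refine Real.rpow_le_one (by positivity) ?_ (by simp)
    calc ∑ i, ‖(SignType.sign (x i) : ℝ) * g i‖ ^ q.toReal ≤ ∑ i, (g i : ℝ) ^ q.toReal := by
          gcongr with i
          rw [norm_mul, NNReal.norm_eq]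
          exact mul_le_of_le_one_left (g i).2 (abs_coe_signType_le_one _)
      _ ≤ 1 := mod_cast hg
  · rw [PiLp.norm_eq_sum hpq.pos]
    have hgx' := congrArg ((↑) : ℝ≥0 → ℝ) hgx
    push_cast at hgx'
    simpa [dotProduct, mul_right_comm, sign_mul_self] using hgx'

theorem isCompact_setOf_norm_toLp_le (r : ℝ) : IsCompact {w : ι → ℝ | ‖toLp q w‖ ≤ r} := by
  have h : IsCompact (toLp q ⁻¹' Metric.closedBall (0 : PiLp q fun _ : ι => ℝ) r) :=
    (PiLp.homeomorph q _).symm.isCompact_preimage.2 (isCompact_closedBall 0 r)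
  simpa only [Set.preimage, mem_closedBall_zero_iff] using h

theorem convex_setOf_norm_toLp_le (r : ℝ) : Convex ℝ {w : ι → ℝ | ‖toLp q w‖ ≤ r} := by
  simpa [Set.preimage] using (convex_closedBall (0 : PiLp q fun _ : ι => ℝ) r).linear_preimage
    (WithLp.linearEquiv q ℝ (ι → ℝ)).symm.toLinearMap

variable (p q) in
theorem exists_forall_le_dotProduct_of_forall_le_mul_norm_toLp {C : Set (ι → ℝ)} (hC : IsCompact C)
    (hne : C.Nonempty) {g : (ι → ℝ) → ℝ} (hg : ConcaveOn ℝ C g) (hgu : UpperSemicontinuousOn g C)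
    {x : ι → ℝ} {lam : ℝ} (hlam : 0 ≤ lam) (hle : ∀ y ∈ C, g y ≤ lam * ‖toLp p (y - x)‖) :
    ∃ w : ι → ℝ, ‖toLp q w‖ ≤ lam ∧ ∀ y ∈ C, g y ≤ w ⬝ᵥ (y - x) := by
  have hconvex (y : ι → ℝ) :
      ConvexOn ℝ {w : ι → ℝ | ‖toLp q w‖ ≤ lam} fun w => g y - w ⬝ᵥ (y - x) :=
    (convexOn_const _ (convex_setOf_norm_toLp_le lam)).sub
      (((dotProductBilin ℝ ℝ).flip (y - x)).concaveOn (convex_setOf_norm_toLp_le lam))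
  have hconcave (w : ι → ℝ) : ConcaveOn ℝ C fun y => g y - w ⬝ᵥ (y - x) := by
    simp only [dotProduct_sub]
    exact hg.sub (((dotProductBilin ℝ ℝ w).convexOn hg.1).sub (concaveOn_const _ hg.1))
  obtain ⟨w, hw, y₀, hy₀, hsaddle⟩ :=
    Sion.exists_isSaddlePointOn (X := {w : ι → ℝ | ‖toLp q w‖ ≤ lam})
      (f := fun w y => g y - w ⬝ᵥ (y - x)) ⟨0, by simpa using hlam⟩
      (convex_setOf_norm_toLp_le lam) (isCompact_setOf_norm_toLp_le lam)
      (fun y _ => (by fun_prop : Continuous _).lowerSemicontinuous.lowerSemicontinuousOn _)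
      (fun y _ => (hconvex y).quasiconvexOn) hg.1 hne hC
      (fun w _ => hgu.add <|
        (by fun_prop : Continuous fun y => -(w ⬝ᵥ (y - x))).continuousOn.upperSemicontinuousOn)
      (fun w _ => (hconcave w).quasiconcaveOn)
  obtain ⟨u, hu, huy⟩ := exists_norm_toLp_le_one_dotProduct_eq p q (y₀ - x)
  have hu' : ‖toLp q (lam • u)‖ ≤ lam := by
    rw [WithLp.toLp_smul, norm_smul, Real.norm_of_nonneg hlam]
    exact mul_le_of_le_one_right hlam hu
  refine ⟨w, hw, fun y hy => sub_nonpos.1 ?_⟩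
  calc g y - w ⬝ᵥ (y - x) ≤ g y₀ - (lam • u) ⬝ᵥ (y₀ - x) := hsaddle _ hu' _ hy
    _ = g y₀ - lam * ‖toLp p (y₀ - x)‖ := by rw [smul_dotProduct, huy, smul_eq_mul]
    _ ≤ 0 := sub_nonpos.2 (hle y₀ hy₀)

variable (p q) in
theorem forall_le_mul_norm_toLp_iff_exists_dotProduct {C : Set (ι → ℝ)} (hC : IsCompact C)
    {g : (ι → ℝ) → ℝ} (hg : ConcaveOn ℝ C g) (hgu : UpperSemicontinuousOn g C)
    (x : ι → ℝ) {lam : ℝ} (hlam : 0 ≤ lam) :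
    (∀ y ∈ C, g y ≤ lam * ‖toLp p (y - x)‖) ↔
      ∃ w : ι → ℝ, ‖toLp q w‖ ≤ lam ∧ ∀ y ∈ C, g y ≤ w ⬝ᵥ (y - x) := by
  refine ⟨fun hle => ?_, fun ⟨w, hw, hgw⟩ y hy => ?_⟩
  · rcases C.eq_empty_or_nonempty with rfl | hne
    · exact ⟨0, by simpa using hlam, by simp⟩
    · exact exists_forall_le_dotProduct_of_forall_le_mul_norm_toLp p q hC hne hg hgu hlam hle
  · calc g y ≤ w ⬝ᵥ (y - x) := hgw y hy
      _ ≤ ‖toLp q w‖ * ‖toLp p (y - x)‖ := dotProduct_le_norm_toLp_mul_norm_toLp p q w _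
      _ ≤ lam * ‖toLp p (y - x)‖ := by gcongr

end PiLp

section Box

variable {ι : Type*} [Fintype ι] {a b : ι → ℝ}

theorem exists_mem_Icc_dotProduct_eq (hab : a ≤ b) (u : ι → ℝ) :
    ∃ y ∈ Set.Icc a b, u ⬝ᵥ y = u⁺ ⬝ᵥ b - u⁻ ⬝ᵥ a := by
  classical
  refine ⟨fun j => if 0 ≤ u j then b j else a j, ⟨fun j => ?_, fun j => ?_⟩, ?_⟩
  · dsimp only; split_ifs; exacts [hab j, le_rfl]
  · dsimp only; split_ifs; exacts [le_rfl, hab j]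
  · simp only [dotProduct, ← Finset.sum_sub_distrib]
    refine Finset.sum_congr rfl fun j _ => ?_
    split_ifs with hj
    · simp [hj]
    · simp [(not_le.1 hj).le]

theorem forall_mem_Icc_dotProduct_le_iff (hab : a ≤ b) (u : ι → ℝ) (M : ℝ) :
    (∀ y ∈ Set.Icc a b, u ⬝ᵥ y ≤ M) ↔
      ∃ γ η : ι → ℝ, 0 ≤ γ ∧ 0 ≤ η ∧ η - γ = u ∧ η ⬝ᵥ b - γ ⬝ᵥ a ≤ M := by
  constructor
  · intro h
    obtain ⟨y, hy, huy⟩ := exists_mem_Icc_dotProduct_eq hab u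
    exact ⟨u⁻, u⁺, negPart_nonneg u, posPart_nonneg u, posPart_sub_negPart u, huy ▸ h y hy⟩
  · rintro ⟨γ, η, hγ, hη, rfl, hM⟩ y ⟨hay, hyb⟩
    rw [sub_dotProduct]
    linarith [dotProduct_le_dotProduct_of_nonneg_left hay hγ,
      dotProduct_le_dotProduct_of_nonneg_left hyb hη]

theorem forall_mem_Icc_sub_le_add_mul_norm_toLp_iff {p q : ℝ≥0∞} [Fact (1 ≤ p)] [Fact (1 ≤ q)]
    [p.HolderConjugate q] (hab : a ≤ b) (v x : ι → ℝ) (t s : ℝ) {lam : ℝ} (hlam : 0 ≤ lam) :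
    (∀ y ∈ Set.Icc a b, v ⬝ᵥ y - t ≤ s + lam * ‖toLp p (y - x)‖) ↔
      ∃ γ η : ι → ℝ, (v + γ - η) ⬝ᵥ x - γ ⬝ᵥ a + η ⬝ᵥ b - t ≤ s ∧ ‖toLp q (v + γ - η)‖ ≤ lam ∧
        0 ≤ γ ∧ 0 ≤ η := by
  have hconcave : ConcaveOn ℝ (Set.Icc a b) fun y => v ⬝ᵥ y - t - s := by
    simp only [sub_sub]
    exact ((dotProductBilin ℝ ℝ v).concaveOn (convex_Icc a b)).sub
      (convexOn_const _ (convex_Icc a b))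
  have hcont : UpperSemicontinuousOn (fun y => v ⬝ᵥ y - t - s) (Set.Icc a b) :=
    (by fun_prop : Continuous _).continuousOn.upperSemicontinuousOn
  calc (∀ y ∈ Set.Icc a b, v ⬝ᵥ y - t ≤ s + lam * ‖toLp p (y - x)‖)
      ↔ ∃ w : ι → ℝ, ‖toLp q w‖ ≤ lam ∧ ∀ y ∈ Set.Icc a b, v ⬝ᵥ y - t - s ≤ w ⬝ᵥ (y - x) := by
        simp only [← sub_le_iff_le_add',
          ← forall_le_mul_norm_toLp_iff_exists_dotProduct p q isCompact_Icc hconcave hcont x hlam]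
    _ ↔ ∃ w : ι → ℝ, ‖toLp q w‖ ≤ lam ∧
          ∀ y ∈ Set.Icc a b, (v - w) ⬝ᵥ y ≤ s + t - w ⬝ᵥ x := by
        simp only [sub_dotProduct, dotProduct_sub]
        refine exists_congr fun w => and_congr_right fun _ => forall₂_congr fun y _ => ?_
        constructor <;> intro h <;> linarith
    _ ↔ _ := by
        simp only [forall_mem_Icc_dotProduct_le_iff hab]
        constructor
        · rintro ⟨w, hw, γ, η, hγ, hη, hγη, hle⟩
          obtain rfl : w = v + γ - η := by rw [add_sub_assoc, ← neg_sub η γ, hγη]; abel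
          exact ⟨γ, η, by linarith, hw, hγ, hη⟩
        · rintro ⟨γ, η, hle, hw, hγ, hη⟩
          exact ⟨v + γ - η, hw, γ, η, hγ, hη, by abel, by linarith⟩

end Box

section TransportCost

variable {X Y : Type*} [MeasurableSpace X] [MeasurableSpace Y] {c : X → Y → ℝ≥0∞}

/-- The Kantorovich optimal transport cost between two measures: the infimum of `∫⁻ c dK` over
the couplings `K` of `μ` and `ν`. Measures of different total mass have no coupling, so that the
cost between them is `∞`. -/
noncomputable def transportCost (c : X → Y → ℝ≥0∞) (μ : Measure X) (ν : Measure Y) : ℝ≥0∞ :=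
  ⨅ (K : Measure (X × Y)) (_ : K.fst = μ) (_ : K.snd = ν), ∫⁻ z, c z.1 z.2 ∂K

theorem transportCost_le_lintegral (K : Measure (X × Y)) :
    transportCost c K.fst K.snd ≤ ∫⁻ z, c z.1 z.2 ∂K :=
  iInf₂_le_of_le K rfl (iInf_le _ rfl)

theorem transportCost_lt_iff {μ : Measure X} {ν : Measure Y} {e : ℝ≥0∞} :
    transportCost c μ ν < e ↔
      ∃ K : Measure (X × Y), K.fst = μ ∧ K.snd = ν ∧ ∫⁻ z, c z.1 z.2 ∂K < e := by
  simp only [transportCost, iInf_lt_iff, exists_prop]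

theorem transportCost_add_le (μ₁ μ₂ : Measure X) (ν₁ ν₂ : Measure Y) :
    transportCost c (μ₁ + μ₂) (ν₁ + ν₂) ≤ transportCost c μ₁ ν₁ + transportCost c μ₂ ν₂ := by
  conv_rhs => simp only [transportCost, ENNReal.iInf_add, ENNReal.add_iInf]
  simp only [le_iInf_iff]
  rintro K₂ rfl rfl K₁ rfl rfl
  rw [← lintegral_add_measure, ← Measure.fst_add, ← Measure.snd_add]
  exact transportCost_le_lintegral _

theorem transportCost_smul_le (r : ℝ≥0) (μ : Measure X) (ν : Measure Y) :
    transportCost c (r • μ) (r • ν) ≤ r • transportCost c μ ν := by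
  rcases eq_or_ne r 0 with rfl | hr
  · simpa using transportCost_le_lintegral (c := c) 0
  conv_rhs => simp only [transportCost, ENNReal.smul_def, smul_eq_mul,
    ENNReal.mul_iInf_of_ne (ENNReal.coe_ne_zero.2 hr) ENNReal.coe_ne_top]
  simp only [le_iInf_iff, ← smul_eq_mul, ← ENNReal.smul_def]
  rintro K rfl rfl
  simpa [Measure.fst, Measure.snd] using
    transportCost_le_lintegral (c := c) (r • K)

theorem transportCost_sum_smul_dirac_le [MeasurableSingletonClass X] [MeasurableSingletonClass Y]
    {ι : Type*} [Fintype ι] (w : ι → ℝ≥0) (x : ι → X) (y : ι → Y) :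
    transportCost c (∑ i, w i • Measure.dirac (x i)) (∑ i, w i • Measure.dirac (y i)) ≤
      ∑ i, w i • c (x i) (y i) := by
  have h := transportCost_le_lintegral (c := c) (∑ i, w i • Measure.dirac (x i, y i))
  simpa [Measure.fst, Measure.snd, Measure.map_finset_sum measurable_fst.aemeasurable,
    Measure.map_finset_sum measurable_snd.aemeasurable, Measure.map_dirac,
    lintegral_finsetSum_measure] using h

end TransportCost

section DiscreteMeasure

variable {X ι : Type*} [MeasurableSpace X] [Fintype ι]

theorem isProbabilityMeasure_sum_smul_dirac {w : ι → ℝ≥0} (hw : ∑ i, w i = 1) (x : ι → X) :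
    IsProbabilityMeasure (∑ i, w i • Measure.dirac (x i)) :=
  ⟨by simp only [Measure.finsetSum_apply, Measure.smul_apply, measure_univ, ENNReal.smul_def,
    smul_eq_mul, mul_one, ← ENNReal.ofNNReal_finsetSum, hw, ENNReal.coe_one]⟩

variable [MeasurableSingletonClass X] (w : ι → ℝ≥0) (x : ι → X)

theorem ae_sum_smul_dirac {P : X → Prop} (h : ∀ i, P (x i)) :
    ∀ᵐ z ∂∑ i, w i • Measure.dirac (x i), P z := by
  simp [ae_iff, h]

theorem integrable_sum_smul_dirac (f : X → ℝ) :
    Integrable f (∑ i, w i • Measure.dirac (x i)) :=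
  integrable_finsetSum_measure.2 fun i _ => (integrable_dirac (by simp)).smul_measure_nnreal

theorem integral_sum_smul_dirac (f : X → ℝ) :
    ∫ z, f z ∂∑ i, w i • Measure.dirac (x i) = ∑ i, w i * f (x i) := by
  rw [integral_finsetSum_measure fun i _ => (integrable_dirac (by simp)).smul_measure_nnreal]
  simp [integral_smul_nnreal_measure, NNReal.smul_def]

end DiscreteMeasure

section WeakDuality

variable {X Y : Type*} [MeasurableSpace X] [MeasurableSpace Y] {d : X → Y → ℝ≥0}
  {K : Measure (X × Y)}

theorem integrable_coe_of_lintegral_ne_top (hd : Measurable d.uncurry)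
    (hK : ∫⁻ z, d z.1 z.2 ∂K ≠ ∞) : Integrable (fun z => (d z.1 z.2 : ℝ)) K :=
  ⟨hd.coe_nnreal_real.aestronglyMeasurable, by
    simpa [hasFiniteIntegral_iff_enorm] using hK.lt_top⟩

theorem integral_le_integral_add_mul_of_coupling (hd : Measurable d.uncurry)
    (hK : ∫⁻ z, d z.1 z.2 ∂K ≠ ∞) {φ : X → ℝ} {h : Y → ℝ} {lam : ℝ}
    (hφ : Integrable φ K.fst) (hh : Integrable h K.snd)
    (hle : ∀ᵐ z ∂K, h z.2 ≤ φ z.1 + lam * d z.1 z.2) :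
    ∫ y, h y ∂K.snd ≤ ∫ x, φ x ∂K.fst + lam * (∫⁻ z, d z.1 z.2 ∂K).toReal := by
  have hdK := integrable_coe_of_lintegral_ne_top hd hK
  have hφK : Integrable (fun z : X × Y => φ z.1) K := hφ.comp_measurable measurable_fst
  have hhK : Integrable (fun z : X × Y => h z.2) K := hh.comp_measurable measurable_snd
  calc ∫ y, h y ∂K.snd = ∫ z, h z.2 ∂K := integral_map measurable_snd.aemeasurable hh.1
    _ ≤ ∫ z, (φ z.1 + lam * d z.1 z.2) ∂K := integral_mono_ae hhK (hφK.add (hdK.const_mul lam)) hle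
    _ = ∫ z, φ z.1 ∂K + lam * ∫ z, (d z.1 z.2 : ℝ) ∂K := by
        rw [integral_add hφK (hdK.const_mul lam), integral_const_mul]
    _ = ∫ x, φ x ∂K.fst + lam * (∫⁻ z, d z.1 z.2 ∂K).toReal := by
        rw [lintegral_coe_eq_integral _ hdK, ENNReal.toReal_ofReal (by positivity),
          Measure.fst, integral_map measurable_fst.aemeasurable hφ.1]

theorem integral_le_integral_add_mul_of_transportCost_le (hd : Measurable d.uncurry)
    {μ : Measure X} {ν : Measure Y} {φ : X → ℝ} {h : Y → ℝ} {lam ε : ℝ} (hlam : 0 ≤ lam)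
    (hε : 0 ≤ ε) (hT : transportCost (fun x y => d x y) μ ν ≤ ENNReal.ofReal ε)
    (hφ : Integrable φ μ) (hh : Integrable h ν)
    {S : Set Y} (hS : ∀ᵐ y ∂ν, y ∈ S) (hle : ∀ᵐ x ∂μ, ∀ y ∈ S, h y ≤ φ x + lam * d x y) :
    ∫ y, h y ∂ν ≤ ∫ x, φ x ∂μ + lam * ε := by
  have hbudget (e : ℝ) (he : ε < e) : ∫ y, h y ∂ν ≤ ∫ x, φ x ∂μ + lam * e := by
    have he₀ : 0 < e := hε.trans_lt he
    obtain ⟨K, rfl, rfl, hK⟩ :=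
      transportCost_lt_iff.1 (hT.trans_lt ((ENNReal.ofReal_lt_ofReal_iff he₀).2 he))
    have hle' : ∀ᵐ z ∂K, h z.2 ≤ φ z.1 + lam * d z.1 z.2 := by
      filter_upwards [ae_of_ae_map measurable_fst.aemeasurable hle,
        ae_of_ae_map measurable_snd.aemeasurable hS] with z hz hzS using hz _ hzS
    calc ∫ y, h y ∂K.snd ≤ ∫ x, φ x ∂K.fst + lam * (∫⁻ z, d z.1 z.2 ∂K).toReal :=
          integral_le_integral_add_mul_of_coupling hd hK.ne_top hφ hh hle'
      _ ≤ ∫ x, φ x ∂K.fst + lam * e := by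
          gcongr
          exact ENNReal.toReal_le_of_le_ofReal he₀.le hK.le
  have hlim : Tendsto (fun e => ∫ x, φ x ∂μ + lam * e) (𝓝[>] ε) (𝓝 (∫ x, φ x ∂μ + lam * ε)) :=
    ((by fun_prop : Continuous _).tendsto ε).mono_left nhdsWithin_le_nhds
  exact ge_of_tendsto hlim (eventually_nhdsWithin_of_forall hbudget)

theorem integrable_of_transportCost_ne_top {X : Type*} [MeasurableSpace X] {d : X → X → ℝ≥0}
    (hd : Measurable d.uncurry) {μ ν : Measure X} (hT : transportCost (fun x y => d x y) μ ν ≠ ∞)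
    {h : X → ℝ} (hm : Measurable h) {L : ℝ≥0} (hL : ∀ x y, |h y - h x| ≤ L * d x y)
    (hμ : Integrable h μ) : Integrable h ν := by
  obtain ⟨K, rfl, rfl, hK⟩ := transportCost_lt_iff.1 hT.lt_top
  have hdiff : Integrable (fun z : X × X => h z.2 - h z.1) K :=
    ((integrable_coe_of_lintegral_ne_top hd hK.ne).const_mul (L : ℝ)).mono'
      (by fun_prop) (ae_of_all _ fun z => hL z.1 z.2)
  have hsnd : Integrable (fun z : X × X => h z.2) K :=
    (hdiff.add (hμ.comp_measurable measurable_fst)).congr (ae_of_all _ fun _ => sub_add_cancel _ _)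
  exact (integrable_map_measure hm.aestronglyMeasurable measurable_snd.aemeasurable).2 hsnd

end WeakDuality

section LagrangeMultiplier

theorem exists_lagrange_multiplier {A : Set (ℝ × ℝ)} (hA : Convex ℝ A) {ε V : ℝ}
    (hslater : ∃ p ∈ A, p.1 < ε) (hV : ∀ p ∈ A, p.1 ≤ ε → p.2 ≤ V) :
    ∃ lam : ℝ, 0 ≤ lam ∧ ∀ p ∈ A, p.2 + lam * (ε - p.1) ≤ V := by
  let slopes : Set ℝ := (fun p : ℝ × ℝ => (V - p.2) / (ε - p.1)) '' {p ∈ A | p.1 < ε}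
  have hslopes_ne : slopes.Nonempty := Set.Nonempty.image _ hslater
  have hslopes_nonneg : ∀ m ∈ slopes, 0 ≤ m := by
    rintro _ ⟨p, ⟨hp, hpε⟩, rfl⟩
    exact div_nonneg (sub_nonneg.2 (hV p hp hpε.le)) (sub_nonneg.2 hpε.le)
  refine ⟨sInf slopes, Real.sInf_nonneg hslopes_nonneg, fun p hp => ?_⟩
  rcases lt_trichotomy p.1 ε with hpε | hpε | hpε
  · have hle : sInf slopes ≤ (V - p.2) / (ε - p.1) :=
      csInf_le ⟨0, hslopes_nonneg⟩ ⟨p, ⟨hp, hpε⟩, rfl⟩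
    rw [le_div_iff₀ (sub_pos.2 hpε)] at hle
    linarith
  · simpa [hpε] using hV p hp hpε.le
  · suffices hle : (p.2 - V) / (p.1 - ε) ≤ sInf slopes by
      rw [div_le_iff₀ (sub_pos.2 hpε)] at hle
      linarith
    refine le_csInf hslopes_ne ?_
    rintro _ ⟨r, ⟨hr, hrε⟩, rfl⟩
    rw [div_le_div_iff₀ (sub_pos.2 hpε) (sub_pos.2 hrε)]
    have hrp : 0 < p.1 - r.1 := by linarith
    have hcomb : ((p.1 - ε) / (p.1 - r.1)) • r + ((ε - r.1) / (p.1 - r.1)) • p ∈ A :=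
      hA hr hp (by bound) (by bound) (by field_simp; ring)
    have hbudget : ((p.1 - ε) / (p.1 - r.1)) * r.1 + ((ε - r.1) / (p.1 - r.1)) * p.1 = ε := by
      field_simp
      ring
    have hval := hV _ hcomb hbudget.le
    simp only [Prod.snd_add, Prod.smul_snd, smul_eq_mul] at hval
    field_simp at hval
    linarith

theorem exists_sum_le_of_forall_choice {ι κ : Type*} [Fintype ι] [Nonempty κ] {f : ι → κ → ℝ}
    {B : ℝ} (h : ∀ y : ι → κ, ∑ i, f i (y i) ≤ B) :
    ∃ s : ι → ℝ, (∀ i z, f i z ≤ s i) ∧ ∑ i, s i ≤ B := by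
  classical
  have hbdd (i : ι) : BddAbove (Set.range (f i)) := by
    obtain ⟨z₀⟩ := ‹Nonempty κ›
    refine ⟨B - ∑ j ∈ Finset.univ.erase i, f j z₀, ?_⟩
    rintro _ ⟨z, rfl⟩
    have hz := h (Function.update (fun _ => z₀) i z)
    rw [← Finset.add_sum_erase _ _ (Finset.mem_univ i), Function.update_self,
      Finset.sum_congr rfl fun j hj => by rw [Function.update_of_ne (Finset.ne_of_mem_erase hj)]]
      at hz
    linarith
  refine ⟨fun i => ⨆ z, f i z, fun i z => le_ciSup (hbdd i) z, ?_⟩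
  have happrox (δ : ℝ) (hδ : 0 < δ) : ∑ i, ((⨆ z, f i z) - δ) ≤ B := by
    choose y hy using fun i => exists_lt_of_lt_ciSup (sub_lt_self (⨆ z, f i z) hδ)
    exact (Finset.sum_le_sum fun i _ => (hy i).le).trans (h y)
  have hlim : Tendsto (fun δ : ℝ => ∑ i, ((⨆ z, f i z) - δ)) (𝓝[>] 0) (𝓝 (∑ i, ⨆ z, f i z)) := by
    have hcont : Continuous fun δ : ℝ => ∑ i, ((⨆ z, f i z) - δ) := by fun_prop
    simpa using (hcont.tendsto 0).mono_left nhdsWithin_le_nhds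
  exact le_of_tendsto hlim (eventually_nhdsWithin_of_forall happrox)

end LagrangeMultiplier

section StrongDuality

variable {X ι : Type*} {d : X → X → ℝ≥0} {h : X → ℝ} {S : Set X}

/-- The pairs `(s, lam)` feasible for the semi-infinite dual of the worst-case expectation of `h`
over an ambiguity set around a measure with atoms `ξ i`. -/
def dualFeasible (d : X → X → ℝ≥0) (h : X → ℝ) (S : Set X) (ξ : ι → X) : Set ((ι → ℝ) × ℝ) :=
  {p | 0 ≤ p.2 ∧ ∀ i, ∀ y ∈ S, h y ≤ p.1 i + p.2 * d (ξ i) y}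

theorem comp_mem_dualFeasible {L : ℝ≥0} (hL : ∀ x y, |h y - h x| ≤ L * d x y) (S : Set X)
    (ξ : ι → X) : (h ∘ ξ, (L : ℝ)) ∈ dualFeasible d h S ξ :=
  ⟨L.2, fun i y _ => sub_le_iff_le_add'.1 ((le_abs_self _).trans (hL (ξ i) y))⟩

theorem exists_mem_dualFeasible_le_of_forall_sum_le [Fintype ι] {w : ι → ℝ≥0} {ξ : ι → X}
    (hw : ∀ i, 0 < w i) (hS : S.Nonempty) {lam B : ℝ} (hlam : 0 ≤ lam)
    (hB : ∀ y : ι → S, ∑ i, w i * (h (y i) - lam * d (ξ i) (y i)) ≤ B) :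
    ∃ s, (s, lam) ∈ dualFeasible d h S ξ ∧ ∑ i, w i * s i ≤ B := by
  have := hS.to_subtype
  obtain ⟨s, hs, hsB⟩ := exists_sum_le_of_forall_choice
    (f := fun i (y : S) => w i * (h y - lam * d (ξ i) y)) hB
  refine ⟨fun i => s i / w i, ⟨hlam, fun i y hy => ?_⟩, ?_⟩
  · rw [← sub_le_iff_le_add, le_div_iff₀' (mod_cast hw i)]
    exact hs i ⟨y, hy⟩
  · simpa [mul_div_cancel₀, (hw _).ne'] using hsB

variable [MeasurableSpace X]

/-- The Wasserstein-type ambiguity set of radius `ε` around `μ`: the probability measures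
concentrated on `S` to which `μ` can be transported at cost at most `ε`. -/
def ambiguitySet (d : X → X → ℝ≥0) (S : Set X) (μ : Measure X) (ε : ℝ) : Set (Measure X) :=
  {ν | IsProbabilityMeasure ν ∧ ν Sᶜ = 0 ∧
    transportCost (fun x y => d x y) μ ν ≤ ENNReal.ofReal ε}

theorem nonempty_of_mem_ambiguitySet {μ ν : Measure X} {ε : ℝ} (hν : ν ∈ ambiguitySet d S μ ε) :
    S.Nonempty := by
  have := hν.1
  exact (ae_iff.2 hν.2.1 : ∀ᵐ x ∂ν, x ∈ S).exists

theorem smul_add_smul_mem_ambiguitySet {μ ν₁ ν₂ : Measure X} {ε₁ ε₂ : ℝ}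
    (h₁ : ν₁ ∈ ambiguitySet d S μ ε₁) (h₂ : ν₂ ∈ ambiguitySet d S μ ε₂)
    (hε₁ : 0 ≤ ε₁) (hε₂ : 0 ≤ ε₂) {r₁ r₂ : ℝ≥0} (hr : r₁ + r₂ = 1) :
    r₁ • ν₁ + r₂ • ν₂ ∈ ambiguitySet d S μ (r₁ * ε₁ + r₂ * ε₂) := by
  obtain ⟨hν₁, hS₁, hT₁⟩ := h₁
  obtain ⟨hν₂, hS₂, hT₂⟩ := h₂
  refine ⟨⟨?_⟩, by simp [hS₁, hS₂], ?_⟩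
  · simp only [Measure.add_apply, Measure.smul_apply, measure_univ, ENNReal.smul_def, smul_eq_mul,
      mul_one]
    exact mod_cast hr
  · calc transportCost (fun x y => (d x y : ℝ≥0∞)) μ (r₁ • ν₁ + r₂ • ν₂)
        = transportCost (fun x y => (d x y : ℝ≥0∞)) (r₁ • μ + r₂ • μ) (r₁ • ν₁ + r₂ • ν₂) := by
          rw [← add_smul, hr, one_smul]
      _ ≤ r₁ • ENNReal.ofReal ε₁ + r₂ • ENNReal.ofReal ε₂ := by
          refine (transportCost_add_le ..).trans (add_le_add ?_ ?_)
          · exact (transportCost_smul_le ..).trans (by gcongr)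
          · exact (transportCost_smul_le ..).trans (by gcongr)
      _ = ENNReal.ofReal (r₁ * ε₁ + r₂ * ε₂) := by
          rw [ENNReal.ofReal_add (by positivity) (by positivity),
            ENNReal.ofReal_mul (by positivity), ENNReal.ofReal_mul (by positivity)]
          simp [ENNReal.smul_def]

theorem sum_smul_dirac_mem_ambiguitySet [Fintype ι] [MeasurableSingletonClass X]
    {w : ι → ℝ≥0} (hw : ∑ i, w i = 1) (ξ : ι → X) {y : ι → X} (hy : ∀ i, y i ∈ S) :
    ∑ i, w i • Measure.dirac (y i) ∈
      ambiguitySet d S (∑ i, w i • Measure.dirac (ξ i)) (∑ i, w i * d (ξ i) (y i)) := by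
  refine ⟨isProbabilityMeasure_sum_smul_dirac hw y, ae_sum_smul_dirac w y hy,
    (transportCost_sum_smul_dirac_le w ξ y).trans_eq ?_⟩
  norm_cast
  rw [ENNReal.ofReal_coe_nnreal]
  simp [ENNReal.smul_def]

/-- The pairs (transport budget, expectation of `h`) realised by measures on `S`. The constraint
`0 ≤ p.1` is needed because `ambiguitySet` truncates negative radii to `0`. -/
def attainable (d : X → X → ℝ≥0) (h : X → ℝ) (S : Set X) (μ : Measure X) : Set (ℝ × ℝ) :=
  {p | 0 ≤ p.1 ∧ ∃ ν ∈ ambiguitySet d S μ p.1, ∫ x, h x ∂ν = p.2}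

theorem convex_attainable {μ : Measure X} (hint : ∀ ε, ∀ ν ∈ ambiguitySet d S μ ε, Integrable h ν) :
    Convex ℝ (attainable d h S μ) := by
  rintro ⟨ε₁, _⟩ ⟨hε₁, ν₁, hν₁, rfl⟩ ⟨ε₂, _⟩ ⟨hε₂, ν₂, hν₂, rfl⟩ r₁ r₂ hr₁ hr₂ hr
  lift r₁ to ℝ≥0 using hr₁
  lift r₂ to ℝ≥0 using hr₂
  refine ⟨add_nonneg (mul_nonneg r₁.2 hε₁) (mul_nonneg r₂.2 hε₂), r₁ • ν₁ + r₂ • ν₂,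
    smul_add_smul_mem_ambiguitySet hν₁ hν₂ hε₁ hε₂ (mod_cast hr), ?_⟩
  rw [integral_add_measure (hint _ _ hν₁).smul_measure_nnreal (hint _ _ hν₂).smul_measure_nnreal,
    integral_smul_nnreal_measure, integral_smul_nnreal_measure]
  rfl

theorem ambiguitySet_mono (μ : Measure X) : Monotone (ambiguitySet d S μ) :=
  fun _ _ hε _ ⟨hν, hS, hT⟩ => ⟨hν, hS, hT.trans (ENNReal.ofReal_le_ofReal hε)⟩

theorem integrable_of_mem_ambiguitySet (hd : Measurable d.uncurry) (hm : Measurable h) {L : ℝ≥0}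
    (hL : ∀ x y, |h y - h x| ≤ L * d x y) {μ ν : Measure X} (hμ : Integrable h μ) {ε : ℝ}
    (hν : ν ∈ ambiguitySet d S μ ε) : Integrable h ν :=
  integrable_of_transportCost_ne_top hd (hν.2.2.trans_lt ENNReal.ofReal_lt_top).ne hm hL hμ

variable [MeasurableSingletonClass X] [Fintype ι] {w : ι → ℝ≥0} {ξ : ι → X}

theorem sum_smul_dirac_mem_ambiguitySet_self (hw : ∑ i, w i = 1) (hξ : ∀ i, ξ i ∈ S)
    (hdiag : ∀ x, d x x = 0) {ε : ℝ} (hε : 0 ≤ ε) :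
    ∑ i, w i • Measure.dirac (ξ i) ∈ ambiguitySet d S (∑ i, w i • Measure.dirac (ξ i)) ε :=
  ambiguitySet_mono _ hε <| by
    simpa [hdiag] using sum_smul_dirac_mem_ambiguitySet (d := d) hw ξ hξ

theorem integral_le_of_mem_dualFeasible (hd : Measurable d.uncurry) {ε : ℝ} (hε : 0 ≤ ε)
    {ν : Measure X} (hν : ν ∈ ambiguitySet d S (∑ i, w i • Measure.dirac (ξ i)) ε)
    (hh : Integrable h ν) {p : (ι → ℝ) × ℝ} (hp : p ∈ dualFeasible d h S ξ) :
    ∫ x, h x ∂ν ≤ ∑ i, w i * p.1 i + p.2 * ε := by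
  have : Nonempty S := (nonempty_of_mem_ambiguitySet hν).to_subtype
  let φ (x : X) : ℝ := ⨆ y : S, (h y - p.2 * d x y)
  have hbdd (i : ι) (y : S) : h y - p.2 * d (ξ i) y ≤ p.1 i :=
    sub_le_iff_le_add.2 (hp.2 i y y.2)
  have hφ (i : ι) : ∀ y ∈ S, h y ≤ φ (ξ i) + p.2 * d (ξ i) y := fun y hy =>
    sub_le_iff_le_add.1 (le_ciSup (f := fun y : S => h y - p.2 * d (ξ i) y)
      ⟨p.1 i, Set.forall_mem_range.2 (hbdd i)⟩ ⟨y, hy⟩)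
  calc ∫ x, h x ∂ν ≤ ∫ x, φ x ∂(∑ i, w i • Measure.dirac (ξ i)) + p.2 * ε :=
        integral_le_integral_add_mul_of_transportCost_le hd hp.1 hε hν.2.2
          (integrable_sum_smul_dirac w ξ φ) hh hν.2.1 (ae_sum_smul_dirac w ξ hφ)
    _ = ∑ i, w i * φ (ξ i) + p.2 * ε := by rw [integral_sum_smul_dirac]
    _ ≤ ∑ i, w i * p.1 i + p.2 * ε := by
        gcongr with i
        exact ciSup_le (hbdd i)

theorem sum_mul_mem_attainable (hw : ∑ i, w i = 1) (ξ : ι → X) {y : ι → X} (hy : ∀ i, y i ∈ S) :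
    ((∑ i, w i * d (ξ i) (y i), ∑ i, w i * h (y i)) : ℝ × ℝ) ∈
      attainable d h S (∑ i, w i • Measure.dirac (ξ i)) :=
  ⟨by positivity, _, sum_smul_dirac_mem_ambiguitySet hw ξ hy, integral_sum_smul_dirac w y h⟩

theorem exists_mem_dualFeasible_le (hw₀ : ∀ i, 0 < w i) (hw : ∑ i, w i = 1) (hξ : ∀ i, ξ i ∈ S)
    (hd : Measurable d.uncurry) (hdiag : ∀ x, d x x = 0) (hm : Measurable h) {L : ℝ≥0}
    (hL : ∀ x y, |h y - h x| ≤ L * d x y) {ε : ℝ} (hε : 0 ≤ ε) {V : ℝ}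
    (hV : ∀ ν ∈ ambiguitySet d S (∑ i, w i • Measure.dirac (ξ i)) ε, ∫ x, h x ∂ν ≤ V) :
    ∃ p ∈ dualFeasible d h S ξ, ∑ i, w i * p.1 i + p.2 * ε ≤ V := by
  have hself := sum_smul_dirac_mem_ambiguitySet_self hw hξ hdiag le_rfl
  rcases hε.eq_or_lt with rfl | hε
  · exact ⟨_, comp_mem_dualFeasible hL S ξ, by simpa [integral_sum_smul_dirac] using hV _ hself⟩
  obtain ⟨lam, hlam, hA⟩ := exists_lagrange_multiplier
    (convex_attainable fun _ _ =>
      integrable_of_mem_ambiguitySet hd hm hL (integrable_sum_smul_dirac w ξ h))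
    ⟨(0, _), ⟨le_rfl, _, hself, rfl⟩, hε⟩
    (fun _ ⟨_, ν, hν, hval⟩ hle => hval ▸ hV ν (ambiguitySet_mono _ hle hν))
  have hdiscrete (y : ι → S) :
      ∑ i, w i * (h (y i) - lam * d (ξ i) (y i)) ≤ V - lam * ε := by
    have hle := hA _ (sum_mul_mem_attainable hw ξ fun i => (y i).2)
    have hsum : ∑ i, w i * (h (y i) - lam * d (ξ i) (y i)) =
        ∑ i, w i * h (y i) - lam * ∑ i, (w i * d (ξ i) (y i) : ℝ) := by
      simp only [mul_sub, Finset.sum_sub_distrib, Finset.mul_sum, mul_left_comm lam]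
    linarith
  obtain ⟨s, hs, hsV⟩ := exists_mem_dualFeasible_le_of_forall_sum_le hw₀
    (nonempty_of_mem_ambiguitySet hself) hlam hdiscrete
  exact ⟨_, hs, by linarith⟩

theorem sSup_integral_ambiguitySet_eq_sInf_dualFeasible (hw₀ : ∀ i, 0 < w i) (hw : ∑ i, w i = 1)
    (hξ : ∀ i, ξ i ∈ S) (hd : Measurable d.uncurry) (hdiag : ∀ x, d x x = 0) (hm : Measurable h)
    {L : ℝ≥0} (hL : ∀ x y, |h y - h x| ≤ L * d x y) {ε : ℝ} (hε : 0 ≤ ε) :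
    sSup ((fun ν => ∫ x, h x ∂ν) '' ambiguitySet d S (∑ i, w i • Measure.dirac (ξ i)) ε) =
      sInf ((fun p : (ι → ℝ) × ℝ => ∑ i, w i * p.1 i + p.2 * ε) '' dualFeasible d h S ξ) := by
  have hweak : ∀ ν ∈ ambiguitySet d S (∑ i, w i • Measure.dirac (ξ i)) ε,
      ∀ p ∈ dualFeasible d h S ξ, ∫ x, h x ∂ν ≤ ∑ i, w i * p.1 i + p.2 * ε := fun ν hν p hp =>
    integral_le_of_mem_dualFeasible hd hε hν
      (integrable_of_mem_ambiguitySet hd hm hL (integrable_sum_smul_dirac w ξ h) hν) hp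
  have hself := sum_smul_dirac_mem_ambiguitySet_self hw hξ hdiag hε
  have hfeasible := comp_mem_dualFeasible hL S ξ
  refine le_antisymm (csSup_le ⟨_, _, hself, rfl⟩ ?_) ?_
  · rintro _ ⟨ν, hν, rfl⟩
    refine le_csInf ⟨_, _, hfeasible, rfl⟩ ?_
    rintro _ ⟨p, hp, rfl⟩
    exact hweak ν hν p hp
  · obtain ⟨p, hp, hle⟩ := exists_mem_dualFeasible_le hw₀ hw hξ hd hdiag hm hL hε fun ν hν =>
      le_csSup ⟨_, Set.forall_mem_image.2 fun ν' hν' => hweak ν' hν' _ hfeasible⟩ ⟨ν, hν, rfl⟩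
    exact (csInf_le ⟨_, Set.forall_mem_image.2 fun p' hp' => hweak _ hself p' hp'⟩
      ⟨p, hp, rfl⟩).trans hle

end StrongDuality

section EmpiricalDistribution

variable {n N : ℕ} {p q : ℝ≥0∞} [Fact (1 ≤ p)] [Fact (1 ≤ q)]

theorem lpNorm_eq_norm_toLp_s9 (x : Fin n → ℝ) : _root_.lpNorm p x = ‖toLp p x‖ := by
  by_cases hp : p = ∞
  · subst hp
    simp [_root_.lpNorm, PiLp.norm_eq_ciSup]
  · have hp₀ : 0 < p.toReal := ENNReal.toReal_pos (zero_lt_one.trans_le Fact.out).ne' hp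
    simp only [_root_.lpNorm, if_neg hp, PiLp.norm_eq_sum hp₀, Real.norm_eq_abs]

theorem ip_eq_dotProduct (x y : Fin n → ℝ) : ip x y = x ⬝ᵥ y := rfl

theorem dW_eq_transportCost (μ ν : Measure (Fin n → ℝ)) [IsProbabilityMeasure μ] :
    dW p μ ν = transportCost (fun x y => (‖toLp p (x - y)‖₊ : ℝ≥0∞)) μ ν := by
  simp only [dW, transportCost, lpNorm_eq_norm_toLp_s9, ofReal_norm, enorm_eq_nnnorm]
  refine iInf_congr fun K => le_antisymm (le_iInf₂ fun hμ hν => ?_) (le_iInf fun _ => le_rfl)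
  have hK : IsProbabilityMeasure K := by
    have : IsProbabilityMeasure (K.map Prod.fst) := by rwa [← Measure.fst, hμ]
    exact Measure.isProbabilityMeasure_of_map Prod.fst
  exact iInf_le_of_le hK (iInf₂_le hμ hν)

theorem empirical_eq_sum_smul_dirac [NeZero N] (ξ : Fin N → Fin n → ℝ) :
    empirical N ξ = ∑ i, (N : ℝ≥0)⁻¹ • Measure.dirac (ξ i) := by
  rw [empirical, ← Finset.smul_sum, ENNReal.smul_def, ENNReal.coe_inv (NeZero.ne _),
    ENNReal.coe_natCast]

theorem mem_ambiguitySet_empirical_iff [NeZero N] (a b : Fin n → ℝ) (ξ : Fin N → Fin n → ℝ)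
    (μ : Measure (Fin n → ℝ)) (ε : ℝ) :
    μ ∈ ambiguitySet (fun x y => ‖toLp p (x - y)‖₊) (Set.Icc a b)
        (∑ i, (N : ℝ≥0)⁻¹ • Measure.dirac (ξ i)) ε ↔
      IsProbabilityMeasure μ ∧ μ {x : Fin n → ℝ | ∀ i, a i ≤ x i ∧ x i ≤ b i}ᶜ = 0 ∧
        dW p (empirical N ξ) μ ≤ ENNReal.ofReal ε := by
  have hprob : IsProbabilityMeasure (∑ i, (N : ℝ≥0)⁻¹ • Measure.dirac (ξ i)) :=
    isProbabilityMeasure_sum_smul_dirac (by simp) ξ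
  have hbox : {x : Fin n → ℝ | ∀ i, a i ≤ x i ∧ x i ≤ b i} = Set.Icc a b :=
    Set.ext fun _ => forall_and
  rw [empirical_eq_sum_smul_dirac, dW_eq_transportCost, hbox]
  rfl

theorem measurable_hfun (v : Fin n → ℝ) (t : ℝ) : Measurable (hfun v t) := by
  unfold hfun ip
  fun_prop

theorem norm_toLp_sub_rev (x y : Fin n → ℝ) : ‖toLp p (x - y)‖ = ‖toLp p (y - x)‖ := by
  rw [WithLp.toLp_sub, WithLp.toLp_sub, norm_sub_rev]

theorem abs_hfun_sub_hfun_le [p.HolderConjugate q] (v x y : Fin n → ℝ) (t : ℝ) :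
    |hfun v t y - hfun v t x| ≤ ‖toLp q v‖ * ‖toLp p (x - y)‖ := by
  have hHolder (z : Fin n → ℝ) : v ⬝ᵥ z ≤ ‖toLp q v‖ * ‖toLp p z‖ :=
    dotProduct_le_norm_toLp_mul_norm_toLp p q v z
  calc |hfun v t y - hfun v t x| ≤ |ip y v - t - (ip x v - t)| := by
        simpa [hfun] using abs_max_sub_max_le_abs (ip y v - t) (ip x v - t) 0
    _ = |v ⬝ᵥ (y - x)| := by
        rw [sub_sub_sub_cancel_right, ip_eq_dotProduct, ip_eq_dotProduct, ← sub_dotProduct,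
          dotProduct_comm]
    _ ≤ ‖toLp q v‖ * ‖toLp p (x - y)‖ := abs_le'.2
        ⟨norm_toLp_sub_rev (p := p) x y ▸ hHolder (y - x),
          by rw [← dotProduct_neg, neg_sub]; exact hHolder (x - y)⟩

theorem forall_mem_Icc_hfun_le_iff [p.HolderConjugate q] {a b x : Fin n → ℝ}
    (hx : x ∈ Set.Icc a b) (v : Fin n → ℝ) (t s : ℝ) {lam : ℝ} (hlam : 0 ≤ lam) :
    (∀ y ∈ Set.Icc a b, hfun v t y ≤ s + lam * ‖toLp p (x - y)‖) ↔
      ∃ γ η : Fin n → ℝ, ip (v + γ - η) x - ip γ a + ip η b - t ≤ s ∧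
        _root_.lpNorm q (v + γ - η) ≤ lam ∧ (∀ j, 0 ≤ γ j) ∧ (∀ j, 0 ≤ η j) ∧ 0 ≤ s := by
  have hpos : (∀ y ∈ Set.Icc a b, 0 ≤ s + lam * ‖toLp p (x - y)‖) ↔ 0 ≤ s :=
    ⟨fun h => by simpa using h x hx, fun hs y _ => by positivity⟩
  have hlin := forall_mem_Icc_sub_le_add_mul_norm_toLp_iff (p := p) (q := q) (hx.1.trans hx.2)
    v x t s hlam
  simp only [hfun, max_le_iff, forall_and, hpos, ip_eq_dotProduct, lpNorm_eq_norm_toLp_s9]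
  simp only [dotProduct_comm _ v, norm_toLp_sub_rev x, hlin, Pi.le_def, Pi.zero_apply]
  simp only [← exists_and_right, and_assoc]

theorem mem_dualFeasible_hfun_iff [p.HolderConjugate q] [NeZero N] {a b : Fin n → ℝ}
    {ξ : Fin N → Fin n → ℝ} (hξ : ∀ i, ξ i ∈ Set.Icc a b) (v : Fin n → ℝ) (t : ℝ)
    (s : Fin N → ℝ) (lam : ℝ) :
    (s, lam) ∈ dualFeasible (fun x y => ‖toLp p (x - y)‖₊) (hfun v t) (Set.Icc a b) ξ ↔
      ∃ γ η : Fin N → Fin n → ℝ, ∀ i,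
        ip (v + γ i - η i) (ξ i) - ip (γ i) a + ip (η i) b - t ≤ s i ∧
          _root_.lpNorm q (v + γ i - η i) ≤ lam ∧
          (∀ j, 0 ≤ γ i j) ∧ (∀ j, 0 ≤ η i j) ∧ 0 ≤ s i := by
  constructor
  · rintro ⟨hlam, hle⟩
    choose γ η h using fun i =>
      (forall_mem_Icc_hfun_le_iff (q := q) (hξ i) v t (s i) hlam).1 (hle i)
    exact ⟨γ, η, h⟩
  · rintro ⟨γ, η, h⟩
    have hlam : 0 ≤ lam := by
      have hnorm := (h 0).2.1
      rw [lpNorm_eq_norm_toLp_s9] at hnorm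
      exact (norm_nonneg _).trans hnorm
    exact ⟨hlam, fun i => (forall_mem_Icc_hfun_le_iff (q := q) (hξ i) v t (s i) hlam).2
      ⟨γ i, η i, h i⟩⟩

end EmpiricalDistribution

end Development

/-- Theorem 2, inner worst-case expectation with support set: the supremum of
`∫ h(v,t,·) dμ` over probability measures supported on the box `[a,b]` in the Wasserstein
ball of radius `ε` around `F_N` equals the optimal value of the dual convex program. -/
theorem stmt9 (n : ℕ) (hn : 1 ≤ n) (p q : ℝ≥0∞) (hp : 1 ≤ p) (hpq : 1 / p + 1 / q = 1)
    (a b : Fin n → ℝ) (hab : ∀ i, a i ≤ b i)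
    (N : ℕ) (hN : 1 ≤ N) (ξ : Fin N → Fin n → ℝ)
    (hξ : ∀ k, ∀ i, a i ≤ ξ k i ∧ ξ k i ≤ b i)
    (v : Fin n → ℝ) (t ε : ℝ) (hε : 0 ≤ ε) :
    sSup {r : ℝ | ∃ μ : Measure (Fin n → ℝ), IsProbabilityMeasure μ ∧
        μ {x : Fin n → ℝ | ∀ i, a i ≤ x i ∧ x i ≤ b i}ᶜ = 0 ∧
        dW p (empirical N ξ) μ ≤ ENNReal.ofReal ε ∧ r = ∫ x, hfun v t x ∂μ} =
      sInf {y : ℝ | ∃ (s : Fin N → ℝ) (lam : ℝ) (γ η : Fin N → Fin n → ℝ),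
        (∀ i, ip (v + γ i - η i) (ξ i) - ip (γ i) a + ip (η i) b - t ≤ s i ∧
          lpNorm q (v + γ i - η i) ≤ lam ∧
          (∀ j, 0 ≤ γ i j) ∧ (∀ j, 0 ≤ η i j) ∧ 0 ≤ s i) ∧
        y = (1 / (N : ℝ)) * ∑ i, s i + lam * ε} := by
  have : Fact (1 ≤ p) := ⟨hp⟩
  have : p.HolderConjugate q := ⟨by simpa using hpq⟩
  have : Fact (1 ≤ q) := ⟨ENNReal.HolderConjugate.one_le q p⟩
  have : NeZero N := ⟨by omega⟩
  have hξ' (k : Fin N) : ξ k ∈ Set.Icc a b := ⟨fun i => (hξ k i).1, fun i => (hξ k i).2⟩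
  have hdual := sSup_integral_ambiguitySet_eq_sInf_dualFeasible
    (d := fun x y => ‖WithLp.toLp p (x - y)‖₊) (L := ‖WithLp.toLp q v‖₊)
    (w := fun _ : Fin N => (N : NNReal)⁻¹) (fun _ => by simp [NeZero.pos N]) (by simp) hξ'
    (by unfold Function.uncurry; fun_prop) (by simp) (measurable_hfun v t)
    (fun x y => by simpa only [coe_nnnorm] using abs_hfun_sub_hfun_le v x y t) hε
  convert hdual using 2
  · ext r
    simp only [Set.mem_ofPred_eq, Set.mem_image, mem_ambiguitySet_empirical_iff, and_assoc,
      eq_comm]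
  · ext y
    simp only [Set.mem_ofPred_eq, Set.mem_image, Prod.exists, exists_and_right,
      mem_dualFeasible_hfun_iff (p := p) (q := q) hξ', NNReal.coe_inv, NNReal.coe_natCast,
      ← Finset.mul_sum, one_div, eq_comm]
end
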